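/- There is an absolute constant C > 0 with the following property. Let k ≥ 0 be an integer and let E be a system of b substring equations on a text T of length n, each of length at least 3·2^k. Then there exist systems E' and E'' of substring equations on T such that: (a) E' contains at most C·b equations, each of length exactly 3·2^k; (b) E'' contains at most b equations, each of length at least 3·2^{k+1}; (c) if T satisfies E, then T satisfies both E' and E''; and (d) for every integer S with 0 ≤ S ≤ 2^k, if T satisfies E' with shortage S and T satisfies E'' with shortage 2^{k+1}, then T satisfies E with shortage S. -/

import Mathlib

/-!
Write `M = 2 ^ k`. Each equation of `E` contributes to `E'` four of its restrictions to windows of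
length `3 * M`: the prefix, the suffix, and the windows at offsets `M` and `2 * M`, pushed back to
the suffix when they would overrun. `E''` consists of the members of `E` of length at least `6 * M`.

Consequence of `E` is immediate, as everything is a restriction of an equation of `E`. Conversely,
with shortage `S ≤ M` the prefix and suffix windows still reach `2 * M` positions inside either end,
so for a long equation they overlap or abut the part guaranteed by `E''` with shortage `2 * M`;
for an equation shorter than `6 * M` the four windows alone cover everything
(`exists_window_or_long`). The systems are built without reference to the text, so a single pair
`E', E''` serves all texts (`exists_uniform_decomposition`).
-/

/-- A substring equation `T[p..q] = T[p'..q']`. -/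
structure SubEq where
  p : ℤ
  q : ℤ
  p' : ℤ
  q' : ℤ
deriving DecidableEq

/-- The equation is well-formed: both fragments have the same length. -/
def SubEq.valid (e : SubEq) : Prop := e.q - e.p = e.q' - e.p'

/-- The (oriented) shift of the equation. -/
def SubEq.shift (e : SubEq) : ℤ := e.p' - e.p

/-- The length of the equation. -/
def SubEq.len (e : SubEq) : ℤ := e.q - e.p + 1

/-- The equation is on a text of length `n`. -/
def SubEq.onText (e : SubEq) (n : ℤ) : Prop :=
  1 ≤ e.p ∧ 1 ≤ e.p' ∧ e.q ≤ n ∧ e.q' ≤ n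

/-- `T` satisfies the equation `e` with shortage `S`. -/
def SatS {α : Type*} (T : ℤ → α) (e : SubEq) (S : ℤ) : Prop :=
  ∀ k : ℤ, e.p + S ≤ k → k ≤ e.q - S → T k = T (k + e.shift)

/-- The restriction of the equation `e` to the window of length `3 * M` at offset `t`. -/
def SubEq.window (e : SubEq) (M t : ℤ) : SubEq :=
  ⟨e.p + t, e.p + t + 3 * M - 1, e.p' + t, e.p' + t + 3 * M - 1⟩

/-- The offsets of the windows used for `e`. The largest admissible offset is `e.len - 3 * M`,
that of the suffix; larger ones are truncated to it. -/
def SubEq.offsets (e : SubEq) (M : ℤ) : Finset ℤ :=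
  {0, min M (e.len - 3 * M), min (2 * M) (e.len - 3 * M), e.len - 3 * M}

theorem SubEq.offsets_bounds {e : SubEq} {M t : ℤ} (hM : 0 < M) (hl : 3 * M ≤ e.len)
    (ht : t ∈ e.offsets M) : 0 ≤ t ∧ t ≤ e.len - 3 * M := by
  simp only [SubEq.offsets, Finset.mem_insert, Finset.mem_singleton] at ht
  omega

theorem SubEq.window_shift (e : SubEq) (M t : ℤ) : (e.window M t).shift = e.shift := by
  simp only [SubEq.window, SubEq.shift]
  ring

/-- A position of `e` at depth at least `S ≤ M` lies at depth at least `S` in one of the windows,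
unless `e` is long and the position is at depth at least `2 * M`. -/
theorem SubEq.exists_window_or_long {e : SubEq} {M S x : ℤ} (hS : S ≤ M)
    (h1 : e.p + S ≤ x) (h2 : x ≤ e.q - S) :
    (∃ t ∈ e.offsets M, e.p + t + S ≤ x ∧ x ≤ e.p + t + 3 * M - 1 - S) ∨
      (6 * M ≤ e.len ∧ e.p + 2 * M ≤ x ∧ x ≤ e.q - 2 * M) := by
  simp only [SubEq.offsets, Finset.mem_insert, Finset.mem_singleton, exists_eq_or_imp,
    exists_eq_left, SubEq.len]
  omega

/-- The decomposition, with systems that do not depend on the text. -/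
theorem exists_uniform_decomposition (n : ℤ) (k : ℕ) (E : Finset SubEq)
    (hE : ∀ e ∈ E, e.valid ∧ e.onText n ∧ 3 * 2 ^ k ≤ e.len) :
    ∃ E' E'' : Finset SubEq,
      E'.card ≤ 4 * E.card ∧
      (∀ e ∈ E', e.valid ∧ e.onText n ∧ e.len = 3 * 2 ^ k) ∧
      E''.card ≤ E.card ∧
      (∀ e ∈ E'', e.valid ∧ e.onText n ∧ 3 * 2 ^ (k + 1) ≤ e.len) ∧
      ∀ (α : Type) (T : ℤ → α),
        ((∀ e ∈ E, SatS T e 0) →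
          (∀ e ∈ E', SatS T e 0) ∧ (∀ e ∈ E'', SatS T e 0)) ∧
        (∀ S : ℤ, 0 ≤ S → S ≤ 2 ^ k →
          (∀ e ∈ E', SatS T e S) → (∀ e ∈ E'', SatS T e (2 ^ (k + 1))) →
          ∀ e ∈ E, SatS T e S) := by
  have hM : (0 : ℤ) < 2 ^ k := by positivity
  have hk : (2 : ℤ) ^ (k + 1) = 2 * 2 ^ k := by ring
  rw [hk]
  generalize (2 : ℤ) ^ k = M at *
  refine ⟨E.biUnion fun e => (e.offsets M).image (e.window M), E.filter fun e => 6 * M ≤ e.len,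
    ?_, ?_, Finset.card_filter_le _ _, ?_, fun α T => ⟨fun h => ⟨?_, ?_⟩, ?_⟩⟩
  · rw [mul_comm]
    exact Finset.card_biUnion_le_card_mul _ _ _ fun e _ =>
      Finset.card_image_le.trans Finset.card_le_four
  · intro w hw
    simp only [Finset.mem_biUnion, Finset.mem_image] at hw
    obtain ⟨e, he, t, ht, rfl⟩ := hw
    obtain ⟨hv, ho, hl⟩ := hE e he
    have hb := SubEq.offsets_bounds hM hl ht
    simp only [SubEq.valid, SubEq.onText, SubEq.len, SubEq.window] at *
    omega
  · intro e he
    rw [Finset.mem_filter] at he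
    obtain ⟨hv, ho, -⟩ := hE e he.1
    exact ⟨hv, ho, by linarith [he.2]⟩
  · intro w hw
    simp only [Finset.mem_biUnion, Finset.mem_image] at hw
    obtain ⟨e, he, t, ht, rfl⟩ := hw
    have hb := SubEq.offsets_bounds hM (hE e he).2.2 ht
    intro x hx1 hx2
    rw [SubEq.window_shift]
    simp only [SubEq.window, SubEq.len] at hx1 hx2 hb
    exact h e he x (by omega) (by omega)
  · exact fun e he => h e (Finset.mem_filter.1 he).1
  · intro S _ hS h' h'' e he x hx1 hx2
    rcases SubEq.exists_window_or_long hS hx1 hx2 with ⟨t, ht, ht1, ht2⟩ | ⟨hl, hx3, hx4⟩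
    · rw [← SubEq.window_shift e M t]
      exact h' _ (Finset.mem_biUnion.2 ⟨e, he, Finset.mem_image_of_mem _ ht⟩) x ht1 ht2
    · exact h'' e (Finset.mem_filter.2 ⟨he, hl⟩) x hx3 hx4

/-- Lemma 20: decomposing a system of `b` substring equations of length at least
`3·2^k` into a system `E'` of `O(b)` equations of length exactly `3·2^k` and a
system `E''` of at most `b` equations of length at least `3·2^{k+1}`. -/
theorem decompose_system : ∃ C : ℝ, 0 < C ∧
    ∀ (α : Type) (T : ℤ → α) (n : ℤ) (k : ℕ) (E : Finset SubEq) (b : ℕ),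
      b = E.card →
      (∀ e ∈ E, e.valid ∧ e.onText n ∧ 3 * 2 ^ k ≤ e.len) →
      ∃ E' E'' : Finset SubEq,
        (E'.card : ℝ) ≤ C * (b : ℝ) ∧
        (∀ e ∈ E', e.valid ∧ e.onText n ∧ e.len = 3 * 2 ^ k) ∧
        E''.card ≤ b ∧
        (∀ e ∈ E'', e.valid ∧ e.onText n ∧ 3 * 2 ^ (k + 1) ≤ e.len) ∧
        ((∀ e ∈ E, SatS T e 0) →
          (∀ e ∈ E', SatS T e 0) ∧ (∀ e ∈ E'', SatS T e 0)) ∧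
        (∀ S : ℤ, 0 ≤ S → S ≤ 2 ^ k →
          (∀ e ∈ E', SatS T e S) → (∀ e ∈ E'', SatS T e (2 ^ (k + 1))) →
          ∀ e ∈ E, SatS T e S) := by
  refine ⟨4, by norm_num, ?_⟩
  rintro α T n k E b rfl hE
  obtain ⟨E', E'', h1, h2, h3, h4, h5⟩ := exists_uniform_decomposition n k E hE
  exact ⟨E', E'', by exact_mod_cast h1, h2, h3, h4, h5 α T⟩
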